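/- Let v₁ ≥ 2, v₂, v₃, N be positive integers, let S be a set of size v₁, let 𝐯 = (v₁,v₂,v₃) and 𝐤 = (2,1,1). Then there exists a 2-(𝐯,𝐤,1) generalized packing with N blocks if and only if there exists a v₂ × v₃ array A such that: (i) each cell of A is either empty or contains an unordered pair of distinct elements of S; (ii) exactly N cells are non-empty; (iii) each symbol of S appears at most once in each row and at most once in each column of A; and (iv) each unordered pair of symbols appears in at most one cell of A. -/

import Mathlib

/-!
A block of type `(2,1,1)` is a pair `a` of points together with a row `i` and a column `j`, so it is
the same thing as an array cell `(i, j)` filled with `a`. The `((2,1,1), 2)`-admissible tuples are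
`(0,1,1)`, `(1,1,0)`, `(1,0,1)` and `(2,0,0)`; the packing condition for them says respectively
that each cell is filled at most once, each symbol occurs at most once per row, at most once per
column, and each pair occurs in at most one cell.

`isGenPacking_iff` unfolds the packing condition into its three coordinates, and `stmt12` reads off
the two constructions, transporting symbols along a bijection `α ≃ Fin v₁`.
-/

open Finset

/-- A `t`-`(𝐯,𝐤,λ)` generalized packing: a multiset of blocks `B` with `|B i| = k i`,
such that for every `(𝐤,t)`-admissible tuple `t'` and every tuple of sets `T` with
`|T i| = t' i`, at most `lam` blocks contain `T` componentwise. -/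
def IsGenPacking {ι : Type} [Fintype ι] [DecidableEq ι] (t lam : ℕ) (v k : ι → ℕ)
    (P : Multiset (∀ i : ι, Finset (Fin (v i)))) : Prop :=
  (∀ B ∈ P, ∀ i, (B i).card = k i) ∧
  ∀ t' : ι → ℕ, (∀ i, t' i ≤ k i) → (∑ i, t' i) = t →
    ∀ T : ∀ i : ι, Finset (Fin (v i)), (∀ i, (T i).card = t' i) →
      (P.filter (fun B => ∀ i, T i ⊆ B i)).card ≤ lam

/-- The generalized packing number `D_λ(𝐯,𝐤,t)`. -/
noncomputable def genPackingNumber (ι : Type) [Fintype ι] [DecidableEq ι] (t lam : ℕ) (v k : ι → ℕ) : ℕ :=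
  sSup {N | ∃ P, IsGenPacking t lam v k P ∧ Multiset.card P = N}

/-- The ordinary packing number `D_λ(v,k,t)`, as the case `m = 1`. -/
noncomputable def ordPackingNumber (v k t lam : ℕ) : ℕ :=
  genPackingNumber (Fin 1) t lam (fun _ => v) (fun _ => k)

/-- The triple `(a, b, c)` as a dependent function on `Fin 3`. -/
def mkBlock {v₁ v₂ v₃ : ℕ} (a : Finset (Fin v₁)) (b : Finset (Fin v₂)) (c : Finset (Fin v₃)) :
    ∀ i : Fin 3, Finset (Fin (![v₁, v₂, v₃] i))
  | 0 => a
  | 1 => b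
  | 2 => c

/-- The coordinate of a block at the symbols. This and the next two projections give the coordinates
the types `Finset (Fin vᵢ)`, free of the vector notation. -/
def symbols {v₁ v₂ v₃ : ℕ} (B : ∀ i : Fin 3, Finset (Fin (![v₁, v₂, v₃] i))) :
    Finset (Fin v₁) := B 0

/-- The coordinate of a block at the rows. -/
def rows {v₁ v₂ v₃ : ℕ} (B : ∀ i : Fin 3, Finset (Fin (![v₁, v₂, v₃] i))) :
    Finset (Fin v₂) := B 1

/-- The coordinate of a block at the columns. -/
def cols {v₁ v₂ v₃ : ℕ} (B : ∀ i : Fin 3, Finset (Fin (![v₁, v₂, v₃] i))) :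
    Finset (Fin v₃) := B 2

theorem block_ext {v₁ v₂ v₃ : ℕ} {B C : ∀ i : Fin 3, Finset (Fin (![v₁, v₂, v₃] i))}
    (h0 : symbols B = symbols C) (h1 : rows B = rows C) (h2 : cols B = cols C) : B = C := by
  funext i
  fin_cases i
  · exact h0
  · exact h1
  · exact h2

/-- The two decidability instances are arbitrary, since the one inside `IsGenPacking` is not the one
found by instance search over `Fin 3`. -/
theorem card_filter_le_of_imp {β : Type*} {P : Multiset β} {p q : β → Prop}
    {_ : DecidablePred p} {_ : DecidablePred q} {n : ℕ} (hpq : ∀ B, p B → q B)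
    (h : (P.filter q).card ≤ n) : (P.filter p).card ≤ n :=
  le_trans (Multiset.card_le_card (Multiset.monotone_filter_right P hpq)) h

theorem isGenPacking_iff {v₁ v₂ v₃ : ℕ}
    (P : Multiset (∀ i : Fin 3, Finset (Fin (![v₁, v₂, v₃] i)))) :
    IsGenPacking 2 1 ![v₁, v₂, v₃] ![2, 1, 1] P ↔
      (∀ B ∈ P, (symbols B).card = 2 ∧ (rows B).card = 1 ∧ (cols B).card = 1) ∧
      ∀ (a : Finset (Fin v₁)) (b : Finset (Fin v₂)) (c : Finset (Fin v₃)),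
        a.card ≤ 2 → b.card ≤ 1 → c.card ≤ 1 → a.card + b.card + c.card = 2 →
        (P.filter (fun B => a ⊆ symbols B ∧ b ⊆ rows B ∧ c ⊆ cols B)).card ≤ 1 := by
  constructor
  · rintro ⟨hk, hP⟩
    refine ⟨fun B hB => ⟨hk B hB 0, hk B hB 1, hk B hB 2⟩, fun a b c ha hb hc hs => ?_⟩
    have h := hP ![a.card, b.card, c.card]
      (by intro i; fin_cases i <;> simpa) (by simpa [Fin.sum_univ_three] using hs)
      (mkBlock a b c) (by intro i; fin_cases i <;> rfl)
    refine card_filter_le_of_imp ?_ h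
    rintro B ⟨h0, h1, h2⟩ i
    fin_cases i
    · exact h0
    · exact h1
    · exact h2
  · rintro ⟨hk, hP⟩
    refine ⟨fun B hB i => ?_, fun t' ht hs T hT => ?_⟩
    · obtain ⟨h0, h1, h2⟩ := hk B hB
      fin_cases i
      · exact h0
      · exact h1
      · exact h2
    · have e0 : (symbols T).card = t' 0 := hT 0
      have e1 : (rows T).card = t' 1 := hT 1
      have e2 : (cols T).card = t' 2 := hT 2
      have l0 : t' 0 ≤ 2 := ht 0
      have l1 : t' 1 ≤ 1 := ht 1
      have l2 : t' 2 ≤ 1 := ht 2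
      rw [Fin.sum_univ_three] at hs
      have h := hP (symbols T) (rows T) (cols T) (by omega) (by omega) (by omega) (by omega)
      refine card_filter_le_of_imp ?_ h
      intro B hB
      exact ⟨hB 0, hB 1, hB 2⟩

theorem eq_of_card_filter_le_one {β : Type*} {P : Multiset β} {p : β → Prop} [DecidablePred p]
    (h : (P.filter p).card ≤ 1) {B C : β} (hB : B ∈ P) (hC : C ∈ P) (pB : p B) (pC : p C) :
    B = C := by
  have mB := Multiset.mem_filter.mpr ⟨hB, pB⟩
  have mC := Multiset.mem_filter.mpr ⟨hC, pC⟩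
  obtain ⟨D, hD⟩ := Multiset.card_eq_one.mp
    (le_antisymm h (Multiset.card_pos_iff_exists_mem.mpr ⟨B, mB⟩))
  rw [hD, Multiset.mem_singleton] at mB mC
  rw [mB, mC]

/-- for `𝐯 = (v₁,v₂,v₃)` and `𝐤 = (2,1,1)`, a `2`-`(𝐯,𝐤,1)` generalized
packing with `N` blocks exists iff there is a `v₂ × v₃` array whose cells are either empty
or contain an unordered pair from a symbol set of size `v₁`, with exactly `N` non-empty
cells, each symbol at most once per row and per column, and each pair in at most one cell. -/
theorem stmt12 (v₁ v₂ v₃ N : ℕ) (h1 : 2 ≤ v₁) (h2 : 1 ≤ v₂) (h3 : 1 ≤ v₃) (hN : 1 ≤ N)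
    (α : Type) [Fintype α] [DecidableEq α] (hcard : Fintype.card α = v₁) :
    (∃ P : Multiset (∀ i : Fin 3, Finset (Fin (![v₁, v₂, v₃] i))),
        IsGenPacking 2 1 ![v₁, v₂, v₃] ![2, 1, 1] P ∧ Multiset.card P = N) ↔
    (∃ A : Fin v₂ → Fin v₃ → Finset α,
        (∀ i j, A i j = ∅ ∨ (A i j).card = 2) ∧
        ((Finset.univ : Finset (Fin v₂ × Fin v₃)).filter fun p => A p.1 p.2 ≠ ∅).card = N ∧
        (∀ i, ∀ x : α, (Finset.univ.filter fun j => x ∈ A i j).card ≤ 1) ∧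
        (∀ j, ∀ x : α, (Finset.univ.filter fun i => x ∈ A i j).card ≤ 1) ∧
        (∀ i j i' j', (i, j) ≠ (i', j') → (A i j).card = 2 → A i j ≠ A i' j')) := by
  classical
  let e : α ≃ Fin v₁ := Fintype.equivFinOfCardEq hcard
  simp only [isGenPacking_iff]
  constructor
  · rintro ⟨P, ⟨hk, hP⟩, hPN⟩
    have key : ∀ (a : Finset (Fin v₁)) (b : Finset (Fin v₂)) (c : Finset (Fin v₃)),
        a.card ≤ 2 → b.card ≤ 1 → c.card ≤ 1 → a.card + b.card + c.card = 2 →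
        ∀ B ∈ P, ∀ C ∈ P, (a ⊆ symbols B ∧ b ⊆ rows B ∧ c ⊆ cols B) →
          (a ⊆ symbols C ∧ b ⊆ rows C ∧ c ⊆ cols C) → B = C :=
      fun a b c ha hb hc hs B hB C hC h h' =>
        eq_of_card_filter_le_one (hP a b c ha hb hc hs) hB hC h h'
    -- A repeated block would cover its own (row, column) pair twice.
    have hnd : P.Nodup := by
      rw [Multiset.nodup_iff_count_le_one]
      intro B
      by_cases hB : B ∈ P
      · obtain ⟨h0, h1, h2⟩ := hk B hB
        refine le_trans ?_ (hP ∅ (rows B) (cols B) (by simp) h1.le h2.le (by simp [h1, h2]))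
        rw [← Multiset.count_filter_of_pos
          (p := fun C => ∅ ⊆ symbols C ∧ rows B ⊆ rows C ∧ cols B ⊆ cols C) (by simp)]
        exact Multiset.count_le_card _ _
      · simp [Multiset.count_eq_zero_of_notMem hB]
    have cellEq : ∀ i j, ∀ B ∈ P, ∀ C ∈ P, i ∈ rows B → j ∈ cols B → i ∈ rows C → j ∈ cols C →
        B = C := fun i j B hB C hC h1 h2 h3 h4 =>
      key ∅ {i} {j} (by simp) (by simp) (by simp) (by simp) B hB C hC
        (by simp [h1, h2]) (by simp [h3, h4])
    let A : Fin v₂ → Fin v₃ → Finset α := fun i j =>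
      Finset.univ.filter fun x => ∃ B ∈ P, e x ∈ symbols B ∧ i ∈ rows B ∧ j ∈ cols B
    have hmem : ∀ i j x, x ∈ A i j ↔ ∃ B ∈ P, e x ∈ symbols B ∧ i ∈ rows B ∧ j ∈ cols B := by
      intro i j x; simp [A]
    have hA : ∀ i j, ∀ B ∈ P, i ∈ rows B → j ∈ cols B →
        A i j = (symbols B).map e.symm.toEmbedding := by
      intro i j B hB hi hj
      ext x
      rw [hmem, Finset.mem_map_equiv, Equiv.symm_symm]
      constructor
      · rintro ⟨C, hC, hx, hi', hj'⟩
        rwa [cellEq i j B hB C hC hi hj hi' hj']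
      · exact fun hx => ⟨B, hB, hx, hi, hj⟩
    have hne : ∀ i j, A i j ≠ ∅ → ∃ B ∈ P, i ∈ rows B ∧ j ∈ cols B := by
      intro i j h
      obtain ⟨x, hx⟩ := Finset.nonempty_iff_ne_empty.mpr h
      obtain ⟨B, hB, -, hi, hj⟩ := (hmem i j x).mp hx
      exact ⟨B, hB, hi, hj⟩
    have one : ∀ {n : ℕ} {s : Finset (Fin n)}, s.card = 1 → ∀ {a b}, a ∈ s → b ∈ s → a = b :=
      fun h _ _ ha hb => Finset.card_le_one.mp (le_of_eq h) _ ha _ hb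
    refine ⟨A, ?_, ?_, ?_, ?_, ?_⟩
    · intro i j
      by_cases h : A i j = ∅
      · exact Or.inl h
      · obtain ⟨B, hB, hi, hj⟩ := hne i j h
        right
        rw [hA i j B hB hi hj, Finset.card_map]
        exact (hk B hB).1
    · have hex : ∀ B ∈ P, ∃ i j, rows B = {i} ∧ cols B = {j} := by
        intro B hB
        obtain ⟨-, h1, h2⟩ := hk B hB
        obtain ⟨i, hi⟩ := Finset.card_eq_one.mp h1
        obtain ⟨j, hj⟩ := Finset.card_eq_one.mp h2
        exact ⟨i, j, hi, hj⟩
      choose f g hf hg using hex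
      rw [← hPN]
      symm
      refine Finset.card_bij (s := ⟨P, hnd⟩) (fun B hB => (f B hB, g B hB)) ?_ ?_ ?_
      · intro B hB
        have hB' : B ∈ P := hB
        have hc : (A (f B hB) (g B hB)).card = 2 := by
          rw [hA _ _ B hB' (by simp [hf B hB']) (by simp [hg B hB']), Finset.card_map]
          exact (hk B hB').1
        simp only [Finset.mem_filter, Finset.mem_univ, true_and]
        intro h0
        simp [h0] at hc
      · intro B hB C hC h
        obtain ⟨hi, hj⟩ := Prod.mk.inj h
        have hB' : B ∈ P := hB
        have hC' : C ∈ P := hC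
        refine cellEq (f B hB) (g B hB) B hB C hC (by simp [hf B hB']) (by simp [hg B hB']) ?_ ?_
        · rw [hi]; simp [hf C hC']
        · rw [hj]; simp [hg C hC']
      · rintro ⟨i, j⟩ hij
        simp only [Finset.mem_filter, Finset.mem_univ, true_and] at hij
        obtain ⟨B, hB, hi, hj⟩ := hne i j hij
        rw [hf B hB, Finset.mem_singleton] at hi
        rw [hg B hB, Finset.mem_singleton] at hj
        exact ⟨B, hB, by rw [hi, hj]⟩
    · intro i x
      rw [Finset.card_le_one]
      intro j hj j' hj'
      simp only [Finset.mem_filter, Finset.mem_univ, true_and, hmem] at hj hj'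
      obtain ⟨B, hB, hx, hi, hj⟩ := hj
      obtain ⟨C, hC, hx', hi', hj'⟩ := hj'
      obtain rfl := key {e x} {i} ∅ (by simp) (by simp) (by simp) (by simp) B hB C hC
        (by simp [hx, hi]) (by simp [hx', hi'])
      exact one (hk B hB).2.2 hj hj'
    · intro j x
      rw [Finset.card_le_one]
      intro i hi i' hi'
      simp only [Finset.mem_filter, Finset.mem_univ, true_and, hmem] at hi hi'
      obtain ⟨B, hB, hx, hi, hj⟩ := hi
      obtain ⟨C, hC, hx', hi', hj'⟩ := hi'
      obtain rfl := key {e x} ∅ {j} (by simp) (by simp) (by simp) (by simp) B hB C hC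
        (by simp [hx, hj]) (by simp [hx', hj'])
      exact one (hk B hB).2.1 hi hi'
    · intro i j i' j' hij hc heq
      have hn : A i j ≠ ∅ := by intro h; simp [h] at hc
      obtain ⟨B, hB, hi, hj⟩ := hne i j hn
      obtain ⟨C, hC, hi', hj'⟩ := hne i' j' (heq ▸ hn)
      rw [hA i j B hB hi hj, hA i' j' C hC hi' hj', Finset.map_inj] at heq
      obtain ⟨h0, h1, h2⟩ := hk B hB
      obtain rfl := key (symbols B) ∅ ∅ h0.le (by simp) (by simp) (by simp [h0]) B hB C hC
        (by simp) (by simp [heq])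
      exact hij (by rw [one h1 hi hi', one h2 hj hj'])
  · rintro ⟨A, hA, hAN, hrow, hcol, hpair⟩
    let blk : Fin v₂ × Fin v₃ → ∀ i : Fin 3, Finset (Fin (![v₁, v₂, v₃] i)) := fun p =>
      mkBlock ((A p.1 p.2).map e.toEmbedding) {p.1} {p.2}
    have hs : ∀ p, symbols (blk p) = (A p.1 p.2).map e.toEmbedding := fun _ => rfl
    have hr : ∀ p, rows (blk p) = {p.1} := fun _ => rfl
    have hc : ∀ p, cols (blk p) = {p.2} := fun _ => rfl
    refine ⟨((Finset.univ : Finset (Fin v₂ × Fin v₃)).filter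
      fun p => A p.1 p.2 ≠ ∅).val.map blk, ⟨?_, ?_⟩, ?_⟩
    · intro B hB
      obtain ⟨p, hp, rfl⟩ := Multiset.mem_map.mp hB
      have hp' : A p.1 p.2 ≠ ∅ := by simpa using hp
      rw [hs, hr, hc, Finset.card_map]
      exact ⟨(hA p.1 p.2).resolve_left hp', by simp, by simp⟩
    · intro a b c ha hb hc' hsum
      rw [Multiset.filter_map, Multiset.card_map, ← Finset.filter_val, Finset.card_val,
        Finset.card_le_one]
      rintro ⟨i, j⟩ hp ⟨i', j'⟩ hq
      simp only [Finset.mem_filter, Finset.mem_univ, true_and, Function.comp, hs, hr, hc]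
        at hp hq
      obtain ⟨hpn, hpa, hpb, hpc⟩ := hp
      obtain ⟨hqn, hqa, hqb, hqc⟩ := hq
      have hrows : b.card = 1 → i = i' := by
        intro h
        obtain ⟨y, rfl⟩ := Finset.card_eq_one.mp h
        simp only [Finset.singleton_subset_iff, Finset.mem_singleton] at hpb hqb
        rw [← hpb, hqb]
      have hcols : c.card = 1 → j = j' := by
        intro h
        obtain ⟨y, rfl⟩ := Finset.card_eq_one.mp h
        simp only [Finset.singleton_subset_iff, Finset.mem_singleton] at hpc hqc
        rw [← hpc, hqc]
      have hsym : a.card = 1 → ∃ x, x ∈ A i j ∧ x ∈ A i' j' := by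
        intro h
        obtain ⟨y, rfl⟩ := Finset.card_eq_one.mp h
        simp only [Finset.singleton_subset_iff, Finset.mem_map_equiv] at hpa hqa
        exact ⟨_, hpa, hqa⟩
      have cases4 : (b.card = 1 ∧ c.card = 1) ∨ (a.card = 1 ∧ b.card = 1) ∨
          (a.card = 1 ∧ c.card = 1) ∨ a.card = 2 := by omega
      rcases cases4 with ⟨h, h'⟩ | ⟨h, h'⟩ | ⟨h, h'⟩ | h
      · rw [hrows h, hcols h']
      · obtain ⟨x, hx, hx'⟩ := hsym h
        obtain rfl := hrows h'
        rw [Finset.card_le_one.mp (hrow i x) j (by simpa using hx) j' (by simpa using hx')]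
      · obtain ⟨x, hx, hx'⟩ := hsym h
        obtain rfl := hcols h'
        rw [Finset.card_le_one.mp (hcol j x) i (by simpa using hx) i' (by simpa using hx')]
      · have c1 := (hA i j).resolve_left hpn
        have c2 := (hA i' j').resolve_left hqn
        have e1 := Finset.eq_of_subset_of_card_le hpa (by rw [Finset.card_map, c1, h])
        have e2 := Finset.eq_of_subset_of_card_le hqa (by rw [Finset.card_map, c2, h])
        by_contra hne
        exact hpair i j i' j' hne c1 (Finset.map_injective _ (e1.symm.trans e2))
    · rw [Multiset.card_map, Finset.card_val, hAN]
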